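/- The number of 2-dimensional subspaces W ⊆ E_3 such that exactly two of the three nonzero elements of W have a 2-element representative equals 210. (These correspond to Klein coverings of hyperelliptic genus 3 curves of type II.2, with generators η = w_1 − w_2, ξ = w_3 − w_4; the degree of the forgetful map on this component is 210.) -/

import Mathlib

/-!
Two even subsets of an 8-element set define the same class in `E3` exactly when they are equal or
complementary (`cls_eq_cls_iff`), and addition of classes is symmetric difference (`cls_add`).
Hence the 28 two-element subsets have distinct nonzero classes. For distinct two-element subsets
`S`, `T`, the third nonzero element `cls S + cls T` of the plane they span is represented by
`S ∆ T`, which has two elements if `S` meets `T`, and four (as does its complement) if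
`S` and `T` are disjoint. So the planes with exactly two nonzero classes of two-element subsets
correspond bijectively to the unordered pairs of disjoint two-element subsets
(`plane_bijective`), and there are `28 * 15 / 2 = 210` of these (`card_disjPairs`).
-/

open Finset Submodule

noncomputable section

def sumMap : (Fin 8 → ZMod 2) →ₗ[ZMod 2] ZMod 2 where
  toFun v := ∑ i, v i
  map_add' v w := by simp [Finset.sum_add_distrib]
  map_smul' c v := by simp [Finset.mul_sum]

def V3 : Submodule (ZMod 2) (Fin 8 → ZMod 2) := LinearMap.ker sumMap

@[simp] lemma sumMap_apply (v : Fin 8 → ZMod 2) : sumMap v = ∑ i, v i := rfl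

lemma mem_V3 (v : Fin 8 → ZMod 2) : v ∈ V3 ↔ ∑ i, v i = 0 := by
  simp [V3, LinearMap.mem_ker]

def onesV : V3 := ⟨fun _ => 1, by rw [mem_V3]; decide⟩

abbrev E3 := V3 ⧸ span (ZMod 2) {onesV}

def indFun (S : Finset (Fin 8)) : Fin 8 → ZMod 2 := fun i => if i ∈ S then 1 else 0

open Classical in
def cls (S : Finset (Fin 8)) : E3 :=
  if h : indFun S ∈ V3 then Submodule.Quotient.mk (⟨indFun S, h⟩ : V3) else 0

/-- `x` has a `k`-element representative -/
def hasRep (k : ℕ) (x : E3) : Prop := ∃ S : Finset (Fin 8), S.card = k ∧ cls S = x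

open scoped symmDiff

lemma indFun_mem_V3 {S : Finset (Fin 8)} (hS : Even S.card) : indFun S ∈ V3 := by
  rw [mem_V3]
  have : ∑ i, indFun S i = (S.card : ZMod 2) := by simp [indFun]
  rw [this]
  exact (ZMod.natCast_eq_zero_iff_even).2 hS

lemma cls_of_even {S : Finset (Fin 8)} (hS : Even S.card) :
    cls S = Submodule.Quotient.mk (⟨indFun S, indFun_mem_V3 hS⟩ : V3) :=
  dif_pos (indFun_mem_V3 hS)

lemma cls_eq_cls_iff {S T : Finset (Fin 8)} (hS : Even S.card) (hT : Even T.card) :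
    cls S = cls T ↔ S = T ∨ S = Tᶜ := by
  rw [cls_of_even hS, cls_of_even hT, Submodule.Quotient.eq, mem_span_singleton]
  constructor
  · rintro ⟨a, ha⟩
    have h : ∀ i, a = indFun S i - indFun T i := fun i => by
      simpa [onesV] using congrFun (congrArg Subtype.val ha) i
    have h2 : ∀ a : ZMod 2, a = 0 ∨ a = 1 := by decide
    clear ha
    rcases h2 a with rfl | rfl
    · left
      ext i
      have hi := h i
      by_cases h1 : i ∈ S <;> by_cases h2 : i ∈ T <;> simp [indFun, h1, h2] at hi ⊢
    · right
      ext i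
      have hi := h i
      by_cases h1 : i ∈ S <;> by_cases h2 : i ∈ T <;> simp [indFun, h1, h2] at hi ⊢
  · rintro (rfl | rfl)
    · exact ⟨0, by simp⟩
    · refine ⟨1, ?_⟩
      ext i
      by_cases h2 : i ∈ T <;> simp [indFun, onesV, h2]

lemma card_symmDiff_add (S T : Finset (Fin 8)) :
    (S ∆ T).card + 2 * (S ∩ T).card = S.card + T.card := by
  have h1 := Finset.card_sdiff_add_card_inter S T
  have h2 := Finset.card_sdiff_add_card_inter T S
  have h3 : (S ∆ T).card = (S \ T).card + (T \ S).card :=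
    Finset.card_union_of_disjoint disjoint_sdiff_sdiff
  rw [Finset.inter_comm T S] at h2
  omega

lemma even_card_symmDiff {S T : Finset (Fin 8)} (hS : Even S.card) (hT : Even T.card) :
    Even (S ∆ T).card := by
  have := card_symmDiff_add S T
  grind

lemma cls_add {S T : Finset (Fin 8)} (hS : Even S.card) (hT : Even T.card) :
    cls S + cls T = cls (S ∆ T) := by
  rw [cls_of_even hS, cls_of_even hT, cls_of_even (even_card_symmDiff hS hT),
    ← Submodule.Quotient.mk_add]
  congr 1
  ext i
  have h2 : (1 : ZMod 2) + 1 = 0 := by decide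
  by_cases h1 : i ∈ S <;> by_cases h2 : i ∈ T <;> simp [indFun, Finset.mem_symmDiff, *]

lemma cls_empty : cls ∅ = 0 := by
  rw [cls_of_even (by simp)]
  exact congrArg _ (Subtype.ext (by ext i; simp [indFun]))

lemma even_of_two {S : Finset (Fin 8)} (hS : S.card = 2) : Even S.card := hS ▸ even_two

lemma cls_injOn_two {S T : Finset (Fin 8)} (hS : S.card = 2) (hT : T.card = 2)
    (h : cls S = cls T) : S = T := by
  rcases (cls_eq_cls_iff (even_of_two hS) (even_of_two hT)).1 h with h | h
  · exact h
  · have := Finset.card_compl T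
    simp [← h, hS, hT] at this

lemma cls_ne_zero {S : Finset (Fin 8)} (hS : S.card = 2) : cls S ≠ 0 := by
  rw [← cls_empty, Ne, cls_eq_cls_iff (even_of_two hS) (by simp)]
  rintro (rfl | rfl) <;> simp at hS

lemma not_hasRep_add {S T : Finset (Fin 8)} (hS : S.card = 2) (hT : T.card = 2)
    (hd : Disjoint S T) : ¬ hasRep 2 (cls S + cls T) := by
  rintro ⟨U, hU, h⟩
  rw [cls_add (even_of_two hS) (even_of_two hT), cls_eq_cls_iff (even_of_two hU)
    (even_card_symmDiff (even_of_two hS) (even_of_two hT))] at h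
  have hc := card_symmDiff_add S T
  rw [Finset.disjoint_iff_inter_eq_empty.1 hd, Finset.card_empty] at hc
  rcases h with rfl | rfl
  · omega
  · rw [Finset.card_compl, Fintype.card_fin] at hU
    omega

lemma hasRep_add {S T : Finset (Fin 8)} (hS : S.card = 2) (hT : T.card = 2) (hne : S ≠ T)
    (hd : ¬ Disjoint S T) : hasRep 2 (cls S + cls T) := by
  refine ⟨S ∆ T, ?_, (cls_add (even_of_two hS) (even_of_two hT)).symm⟩
  have hc := card_symmDiff_add S T
  have h0 : (S ∩ T).card ≠ 0 := by
    rwa [Ne, Finset.card_eq_zero, ← Finset.disjoint_iff_inter_eq_empty]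
  have h2 : (S ∆ T).card ≠ 0 := by
    rw [Ne, Finset.card_eq_zero]
    exact fun h => hne (symmDiff_eq_bot.1 h)
  omega

lemma mem_span_pair_iff (x y z : E3) :
    z ∈ span (ZMod 2) {x, y} ↔ z = 0 ∨ z = x ∨ z = y ∨ z = x + y := by
  rw [mem_span_pair]
  constructor
  · rintro ⟨a, b, rfl⟩
    have h2 : ∀ a : ZMod 2, a = 0 ∨ a = 1 := by decide
    rcases h2 a with rfl | rfl <;> rcases h2 b with rfl | rfl <;> simp
  · rintro (rfl | rfl | rfl | rfl)
    · exact ⟨0, 0, by simp⟩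
    · exact ⟨1, 0, by simp⟩
    · exact ⟨0, 1, by simp⟩
    · exact ⟨1, 1, by simp⟩

lemma add_self_E3 (x : E3) : x + x = 0 := by
  rw [← two_smul (ZMod 2) x, show (2 : ZMod 2) = 0 from rfl, zero_smul]

lemma finrank_span_pair {x y : E3} (hx : x ≠ 0) (hy : y ≠ 0) (hxy : x ≠ y) :
    Module.finrank (ZMod 2) (span (ZMod 2) {x, y}) = 2 := by
  have hli : LinearIndependent (ZMod 2) ![x, y] := by
    rw [LinearIndependent.pair_iff]
    intro a b h
    have h2 : ∀ a : ZMod 2, a = 0 ∨ a = 1 := by decide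
    rcases h2 a with rfl | rfl <;> rcases h2 b with rfl | rfl
    · simp
    · simp [hy] at h
    · simp [hx] at h
    · rw [one_smul, one_smul, ← add_self_E3 y] at h
      exact absurd (add_right_cancel h) hxy
  have h := finrank_span_eq_card hli
  rwa [Matrix.range_cons_cons_empty, Fintype.card_fin] at h

/-- The classes with a two-element representative in the span of the classes of two disjoint
two-element subsets are just these two classes. -/
lemma mem_span_two_iff {S T : Finset (Fin 8)} (hS : S.card = 2) (hT : T.card = 2)
    (hd : Disjoint S T) (x : E3) :
    (x ∈ span (ZMod 2) {cls S, cls T} ∧ x ≠ 0 ∧ hasRep 2 x) ↔ x = cls S ∨ x = cls T := by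
  rw [mem_span_pair_iff]
  constructor
  · rintro ⟨rfl | h | h | rfl, h0, hr⟩
    · exact absurd rfl h0
    · exact Or.inl h
    · exact Or.inr h
    · exact absurd hr (not_hasRep_add hS hT hd)
  · rintro (rfl | rfl)
    · exact ⟨by simp, cls_ne_zero hS, S, hS, rfl⟩
    · exact ⟨by simp, cls_ne_zero hT, T, hT, rfl⟩

/-- The unordered pairs of disjoint two-element subsets of `Fin 8`. -/
def disjPairs : Finset (Finset (Finset (Fin 8))) :=
  (powersetCard 2 (powersetCard 2 univ)).filter fun P => ∀ S ∈ P, ∀ T ∈ P, S = T ∨ Disjoint S T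

lemma card_disjPairs : disjPairs.card = 210 := by
  decide +kernel

lemma mem_disjPairs_iff (P : Finset (Finset (Fin 8))) :
    P ∈ disjPairs ↔
      ∃ S T, S.card = 2 ∧ T.card = 2 ∧ S ≠ T ∧ Disjoint S T ∧ P = {S, T} := by
  simp only [disjPairs, Finset.mem_filter, Finset.mem_powersetCard]
  constructor
  · rintro ⟨⟨hsub, hc⟩, hd⟩
    obtain ⟨S, T, hne, rfl⟩ := Finset.card_eq_two.1 hc
    exact ⟨S, T, (Finset.mem_powersetCard.1 (hsub (by simp))).2,
      (Finset.mem_powersetCard.1 (hsub (by simp))).2, hne,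
      (hd S (by simp) T (by simp)).resolve_left hne, rfl⟩
  · rintro ⟨S, T, hS, hT, hne, hd, rfl⟩
    refine ⟨⟨?_, Finset.card_pair hne⟩, ?_⟩
    · intro U hU
      rcases Finset.mem_insert.1 hU with rfl | hU
      · simp [hS]
      · simp [Finset.mem_singleton.1 hU, hT]
    · simp [hd, hd.symm]

/-- The subspaces of `E3` counted by the theorem. -/
abbrev Plane := {W : Submodule (ZMod 2) E3 //
      Module.finrank (ZMod 2) W = 2 ∧
      Nat.card {x : E3 // x ∈ W ∧ x ≠ 0 ∧ hasRep 2 x} = 2}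

lemma span_pair_mem {S T : Finset (Fin 8)} (hS : S.card = 2) (hT : T.card = 2) (hne : S ≠ T)
    (hd : Disjoint S T) :
    Module.finrank (ZMod 2) (span (ZMod 2) {cls S, cls T}) = 2 ∧
      Nat.card {x : E3 // x ∈ span (ZMod 2) {cls S, cls T} ∧ x ≠ 0 ∧ hasRep 2 x} = 2 := by
  have hcne : cls S ≠ cls T := fun h => hne (cls_injOn_two hS hT h)
  refine ⟨finrank_span_pair (cls_ne_zero hS) (cls_ne_zero hT) hcne, ?_⟩
  simp only [mem_span_two_iff hS hT hd]
  exact Set.ncard_pair hcne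

/-- The plane spanned by the classes of a pair of disjoint two-element subsets. -/
def plane (P : disjPairs) : Plane :=
  ⟨span (ZMod 2) (Set.image cls (P.1 : Set (Finset (Fin 8)))), by
    obtain ⟨P, hP⟩ := P
    obtain ⟨S, T, hS, hT, hne, hd, rfl⟩ := (mem_disjPairs_iff P).1 hP
    rw [Finset.coe_pair, Set.image_pair]
    exact span_pair_mem hS hT hne hd⟩

/-- A pair in `disjPairs` is recovered from its plane. -/
lemma mem_iff_cls_mem_plane (P : disjPairs) (U : Finset (Fin 8)) :
    U ∈ P.1 ↔ U.card = 2 ∧ cls U ∈ (plane P).1 := by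
  obtain ⟨P, hP⟩ := P
  obtain ⟨S, T, hS, hT, hne, hd, rfl⟩ := (mem_disjPairs_iff P).1 hP
  simp only [plane, Finset.coe_pair, Set.image_pair, Finset.mem_insert, Finset.mem_singleton]
  constructor
  · rintro (rfl | rfl)
    · exact ⟨hS, subset_span (by simp)⟩
    · exact ⟨hT, subset_span (by simp)⟩
  · rintro ⟨hU, h⟩
    exact ((mem_span_two_iff hS hT hd _).1 ⟨h, cls_ne_zero hU, U, hU, rfl⟩).imp
      (cls_injOn_two hU hS) (cls_injOn_two hU hT)

lemma plane_bijective : Function.Bijective plane := by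
  constructor
  · intro P Q h
    ext U
    rw [mem_iff_cls_mem_plane, mem_iff_cls_mem_plane, h]
  · rintro ⟨W, hW, hcard⟩
    obtain ⟨x, y, hxy, hset⟩ :=
      Set.ncard_eq_two.1 (show {x : E3 | x ∈ W ∧ x ≠ 0 ∧ hasRep 2 x}.ncard = 2 from hcard)
    have key (z : E3) : (z ∈ W ∧ z ≠ 0 ∧ hasRep 2 z) ↔ z = x ∨ z = y := Set.ext_iff.1 hset z
    obtain ⟨hxW, hx0, S, hS, rfl⟩ := (key x).2 (Or.inl rfl)
    obtain ⟨hyW, hy0, T, hT, rfl⟩ := (key y).2 (Or.inr rfl)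
    have hne : S ≠ T := fun h => hxy (h ▸ rfl)
    have hd : Disjoint S T := by
      -- otherwise `cls S + cls T` would be a third nonzero class of a two-element subset in `W`
      by_contra hd
      have h0 : cls S + cls T ≠ 0 := by
        rw [← add_self_E3 (cls T)]
        exact fun h => hxy (add_right_cancel h)
      rcases (key _).1 ⟨W.add_mem hxW hyW, h0, hasRep_add hS hT hne hd⟩ with h | h
      · exact hy0 (by simpa using h)
      · exact hx0 (by simpa using h)
    refine ⟨⟨{S, T}, (mem_disjPairs_iff _).2 ⟨S, T, hS, hT, hne, hd, rfl⟩⟩, Subtype.ext ?_⟩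
    simp only [plane, Finset.coe_pair, Set.image_pair]
    refine Submodule.eq_of_le_of_finrank_eq ?_ ?_
    · rw [span_le]
      rintro z (rfl | rfl)
      exacts [hxW, hyW]
    · rw [hW, finrank_span_pair hx0 hy0 hxy]

/-- the number of 2-dimensional subspaces `W ⊆ E₃` exactly two of whose
three nonzero elements have a 2-element representative equals 210 (Klein coverings of
hyperelliptic genus 3 curves of type II.2). -/
theorem statement10 :
    Nat.card {W : Submodule (ZMod 2) E3 //
      Module.finrank (ZMod 2) W = 2 ∧
      Nat.card {x : E3 // x ∈ W ∧ x ≠ 0 ∧ hasRep 2 x} = 2} = 210 := by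
  rw [← Nat.card_eq_of_bijective plane plane_bijective, Nat.card_eq_fintype_card,
    Fintype.card_coe, card_disjPairs]

end
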